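/- arXiv:2508.14299 — 2 statements merged into one kernel-verified Lean document; each statement's English description precedes it below -/
import Mathlib

section
/- Let f : ℝⁿ → ℝⁿ be continuously differentiable (C¹) and let X : ℝ × ℝⁿ → ℝⁿ be a jointly C¹ map satisfying X(τ₀, ξ) = ξ for every ξ ∈ ℝⁿ, and such that for every (τ, ξ), the curve σ ↦ X(σ, ξ) has derivative f(X(τ, ξ)) at τ. Fix ξ ∈ ℝⁿ and define Φ(τ) to be the Fréchet derivative of the map ξ' ↦ X(τ, ξ') at ξ, viewed as a continuous linear map ℝⁿ → ℝⁿ. Then Φ(τ₀) is the identity map and, for every τ, the curve Φ (with values in the space of continuous linear maps ℝⁿ → ℝⁿ) has derivative Df(X(τ, ξ)) ∘ Φ(τ) at τ; that is, Φ solves the variational equation dΦ/dτ = (∂f/∂x)(X(τ, ξ)) Φ(τ) with Φ(τ₀) = I. -/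
/-- Variational equation for the state Jacobian of a flow: if `f` is `C¹`, the
flow `X` is jointly `C¹` with `X (τ₀, ξ) = ξ` and `∂X/∂τ = f ∘ X`, then
`Φ τ := ∂X(τ,·)/∂ξ` satisfies `Φ τ₀ = I` and `dΦ/dτ = Df(X(τ,ξ)) ∘ Φ τ`. -/
theorem variational_equation_state {n : ℕ}
    (f : EuclideanSpace ℝ (Fin n) → EuclideanSpace ℝ (Fin n))
    (hf : ContDiff ℝ 1 f)
    (X : ℝ × EuclideanSpace ℝ (Fin n) → EuclideanSpace ℝ (Fin n))
    (hX : ContDiff ℝ 1 X)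
    (τ₀ : ℝ)
    (hinit : ∀ ξ, X (τ₀, ξ) = ξ)
    (hflow : ∀ τ ξ, HasDerivAt (fun σ => X (σ, ξ)) (f (X (τ, ξ))) τ)
    (ξ : EuclideanSpace ℝ (Fin n))
    (Φ : ℝ → (EuclideanSpace ℝ (Fin n) →L[ℝ] EuclideanSpace ℝ (Fin n)))
    (hΦ : ∀ τ, Φ τ = fderiv ℝ (fun ξ' => X (τ, ξ')) ξ) :
    Φ τ₀ = ContinuousLinearMap.id ℝ (EuclideanSpace ℝ (Fin n)) ∧
      ∀ τ, HasDerivAt Φ ((fderiv ℝ f (X (τ, ξ))).comp (Φ τ)) τ := by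
  have hXd : ∀ τ ξ', HasFDerivAt (fun η => X (τ, η))
      ((fderiv ℝ X (τ, ξ')).comp (ContinuousLinearMap.inr ℝ ℝ (EuclideanSpace ℝ (Fin n)))) ξ' := by
    intro τ ξ'
    exact ((hX.differentiable one_ne_zero) (τ, ξ')).hasFDerivAt.comp ξ'
      (hasFDerivAt_prodMk_right τ ξ')
  have hcX : Continuous X := hX.continuous
  have hcf : Continuous f := hf.continuous
  have hcDX : Continuous (fderiv ℝ X) := hX.continuous_fderiv one_ne_zero
  have hcDf : Continuous (fderiv ℝ f) := hf.continuous_fderiv one_ne_zero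
  have hΦ' : ∀ τ, Φ τ = (fderiv ℝ X (τ, ξ)).comp
      (ContinuousLinearMap.inr ℝ ℝ (EuclideanSpace ℝ (Fin n))) := by
    intro τ
    rw [hΦ, (hXd τ ξ).fderiv]
  let G : EuclideanSpace ℝ (Fin n) → ℝ →
      (EuclideanSpace ℝ (Fin n) →L[ℝ] EuclideanSpace ℝ (Fin n)) :=
    fun η t => (fderiv ℝ f (X (t, η))).comp ((fderiv ℝ X (t, η)).comp
      (ContinuousLinearMap.inr ℝ ℝ (EuclideanSpace ℝ (Fin n))))
  have hG : Continuous (fun p : ℝ × EuclideanSpace ℝ (Fin n) => G p.2 p.1) :=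
    (hcDf.comp hcX).clm_comp (hcDX.clm_comp continuous_const)
  have hG1 : Continuous (G ξ) :=
    hG.comp (continuous_id.prodMk continuous_const)
  have hF1 : ∀ η, Continuous (fun t => f (X (t, η))) := fun η =>
    (hcf.comp hcX).comp (continuous_id.prodMk continuous_const)
  have hint : ∀ τ η, X (τ, η) = η + ∫ t in τ₀..τ, f (X (t, η)) := by
    intro τ η
    rw [intervalIntegral.integral_eq_sub_of_hasDerivAt (fun t _ => hflow t η)
      ((hF1 η).intervalIntegrable _ _), hinit]
    abel
  have key : ∀ τ, Φ τ = ContinuousLinearMap.id ℝ (EuclideanSpace ℝ (Fin n))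
      + ∫ t in τ₀..τ, G ξ t := by
    intro τ
    obtain ⟨C, hC⟩ := ((isCompact_uIcc (a := τ₀) (b := τ)).prod
      (isCompact_closedBall ξ 1)).exists_bound_of_continuousOn hG.continuousOn
    have h := intervalIntegral.hasFDerivAt_integral_of_dominated_of_fderiv_le
      (μ := MeasureTheory.volume) (a := τ₀) (b := τ)
      (F := fun η t => f (X (t, η))) (F' := G) (x₀ := ξ) (bound := fun _ => C)
      (Metric.closedBall_mem_nhds ξ one_pos)
      (Filter.Eventually.of_forall fun η => (hF1 η).aestronglyMeasurable)
      ((hF1 ξ).intervalIntegrable _ _) hG1.aestronglyMeasurable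
      (Filter.Eventually.of_forall fun t ht η hη =>
        hC (t, η) ⟨Set.uIoc_subset_uIcc ht, hη⟩)
      intervalIntegrable_const
      (Filter.Eventually.of_forall fun t _ η _ =>
        ((hf.differentiable one_ne_zero) (X (t, η))).hasFDerivAt.comp η (hXd t η))
    have h2 := (hasFDerivAt_id (𝕜 := ℝ) ξ).add h
    rw [hΦ]
    refine HasFDerivAt.fderiv (h2.congr_of_eventuallyEq ?_)
    exact Filter.Eventually.of_forall fun η => hint τ η
  refine ⟨by rw [key]; simp, fun τ => ?_⟩
  have h := ((hG1.integral_hasStrictDerivAt τ₀ τ).hasDerivAt).const_add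
    (ContinuousLinearMap.id ℝ (EuclideanSpace ℝ (Fin n)))
  rw [← funext key] at h
  rw [hΦ' τ]
  exact h
end

section
/- Let f : ℝⁿ × ℝᵐ → ℝⁿ be continuously differentiable (C¹), let ξ₀ ∈ ℝⁿ, and let X : ℝ × ℝᵐ → ℝⁿ be a jointly C¹ map satisfying X(τ₀, η) = ξ₀ for every η ∈ ℝᵐ, and such that for every (τ, η), the curve σ ↦ X(σ, η) has derivative f(X(τ, η), η) at τ. Fix η ∈ ℝᵐ and define Ψ(τ) to be the Fréchet derivative of the map η' ↦ X(τ, η') at η, viewed as a continuous linear map ℝᵐ → ℝⁿ. Then Ψ(τ₀) = 0 and, for every τ, the curve Ψ (with values in the space of continuous linear maps ℝᵐ → ℝⁿ) has derivative (∂f/∂x)(X(τ, η), η) ∘ Ψ(τ) + (∂f/∂u)(X(τ, η), η) at τ; that is, Ψ solves the variational equation dΨ/dτ = (∂f/∂x) Ψ(τ) + (∂f/∂u) with Ψ(τ₀) = 0. -/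
/-- Variational equation for the input Jacobian of a flow: if `f` is `C¹`, the
flow `X` is jointly `C¹` with `X (τ₀, η) = ξ₀` and `∂X/∂τ = f(X, η)`, then
`Ψ τ := ∂X(τ,·)/∂η` satisfies `Ψ τ₀ = 0` and
`dΨ/dτ = (∂f/∂x) ∘ Ψ τ + ∂f/∂u`. -/
theorem variational_equation_input {n m : ℕ}
    (f : EuclideanSpace ℝ (Fin n) × EuclideanSpace ℝ (Fin m) → EuclideanSpace ℝ (Fin n))
    (hf : ContDiff ℝ 1 f)
    (ξ₀ : EuclideanSpace ℝ (Fin n))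
    (X : ℝ × EuclideanSpace ℝ (Fin m) → EuclideanSpace ℝ (Fin n))
    (hX : ContDiff ℝ 1 X)
    (τ₀ : ℝ)
    (hinit : ∀ η, X (τ₀, η) = ξ₀)
    (hflow : ∀ τ η, HasDerivAt (fun σ => X (σ, η)) (f (X (τ, η), η)) τ)
    (η : EuclideanSpace ℝ (Fin m))
    (Ψ : ℝ → (EuclideanSpace ℝ (Fin m) →L[ℝ] EuclideanSpace ℝ (Fin n)))
    (hΨ : ∀ τ, Ψ τ = fderiv ℝ (fun η' => X (τ, η')) η) :
    Ψ τ₀ = 0 ∧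
      ∀ τ, HasDerivAt Ψ
        ((fderiv ℝ (fun x' => f (x', η)) (X (τ, η))).comp (Ψ τ)
          + fderiv ℝ (fun u' => f (X (τ, η), u')) η) τ := by
  have hfd : Differentiable ℝ f := hf.differentiable one_ne_zero
  have hXd : Differentiable ℝ X := hX.differentiable one_ne_zero
  set g : ℝ × EuclideanSpace ℝ (Fin m) → EuclideanSpace ℝ (Fin n) :=
    fun p => f (X p, p.2) with hg_def
  have hg : ContDiff ℝ 1 g := hf.comp (hX.prodMk contDiff_snd)
  have hgd : Differentiable ℝ g := hg.differentiable one_ne_zero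
  set G : ℝ × EuclideanSpace ℝ (Fin m) →
      (EuclideanSpace ℝ (Fin m) →L[ℝ] EuclideanSpace ℝ (Fin n)) :=
    fun p => (fderiv ℝ g p).comp (ContinuousLinearMap.inr ℝ ℝ (EuclideanSpace ℝ (Fin m)))
    with hG_def
  have hGc : Continuous G := (hg.continuous_fderiv one_ne_zero).clm_comp continuous_const
  have hinr : ∀ (σ : ℝ) (η' : EuclideanSpace ℝ (Fin m)),
      HasFDerivAt (fun y : EuclideanSpace ℝ (Fin m) => (σ, y))
        (ContinuousLinearMap.inr ℝ ℝ (EuclideanSpace ℝ (Fin m))) η' :=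
    fun σ η' => hasFDerivAt_prodMk_right σ η'
  have hGd : ∀ σ η', HasFDerivAt (fun y => g (σ, y)) (G (σ, η')) η' := fun σ η' =>
    (hgd (σ, η')).hasFDerivAt.comp η' (hinr σ η')
  have hXint : ∀ τ η', X (τ, η') = ξ₀ + ∫ σ in τ₀..τ, g (σ, η') := by
    intro τ η'
    have hc : Continuous (fun σ => g (σ, η')) := hg.continuous.comp (by fun_prop)
    rw [intervalIntegral.integral_eq_sub_of_hasDerivAt (fun σ _ => hflow σ η')
      (hc.intervalIntegrable _ _), hinit]
    abel
  have hΨint : ∀ τ, Ψ τ = ∫ σ in τ₀..τ, G (σ, η) := by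
    intro τ
    have hK : IsCompact (Set.uIcc τ₀ τ ×ˢ Metric.closedBall η 1) :=
      isCompact_uIcc.prod (isCompact_closedBall η 1)
    obtain ⟨C, hC⟩ := hK.exists_bound_of_continuousOn hGc.continuousOn
    have key : HasFDerivAt (fun y => ∫ σ in τ₀..τ, g (σ, y)) (∫ σ in τ₀..τ, G (σ, η)) η := by
      refine intervalIntegral.hasFDerivAt_integral_of_dominated_of_fderiv_le
        (F := fun y σ => g (σ, y)) (F' := fun y σ => G (σ, y)) (bound := fun _ => C)
        (Metric.closedBall_mem_nhds η one_pos) ?_ ?_ ?_ ?_ ?_ ?_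
      · refine Filter.Eventually.of_forall fun y => ?_
        exact (hg.continuous.comp (by fun_prop : Continuous fun σ : ℝ => (σ, y))).aestronglyMeasurable
      · exact (hg.continuous.comp
          (by fun_prop : Continuous fun σ : ℝ => (σ, η))).intervalIntegrable _ _
      · exact (hGc.comp (by fun_prop : Continuous fun σ : ℝ => (σ, η))).aestronglyMeasurable
      · refine Filter.Eventually.of_forall fun t ht y hy => ?_
        exact hC (t, y) ⟨Set.uIoc_subset_uIcc ht, hy⟩
      · exact intervalIntegrable_const
      · exact Filter.Eventually.of_forall fun t _ y _ => hGd t y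
    rw [hΨ, show (fun y => X (τ, y)) = fun y => ξ₀ + ∫ σ in τ₀..τ, g (σ, y) from
      funext fun y => hXint τ y]
    exact (key.const_add ξ₀).fderiv
  refine ⟨by rw [hΨint, intervalIntegral.integral_same], fun τ => ?_⟩
  have hGη : Continuous fun σ : ℝ => G (σ, η) := hGc.comp (by fun_prop)
  have hd : HasDerivAt Ψ (G (τ, η)) τ := by
    rw [show Ψ = fun t => ∫ σ in τ₀..t, G (σ, η) from funext hΨint]
    exact intervalIntegral.integral_hasDerivAt_right (hGη.intervalIntegrable _ _)
      (hGη.stronglyMeasurableAtFilter _ _) hGη.continuousAt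
  convert hd using 1
  -- chain rule
  have hf' := (hfd (X (τ, η), η)).hasFDerivAt
  have hXη : HasFDerivAt (fun y => X (τ, y)) (Ψ τ) η := by
    rw [hΨ]
    exact ((hXd (τ, η)).hasFDerivAt.comp η (hinr τ η)).differentiableAt.hasFDerivAt
  have h1 : fderiv ℝ (fun x' => f (x', η)) (X (τ, η)) =
      (fderiv ℝ f (X (τ, η), η)).comp (ContinuousLinearMap.inl ℝ _ _) :=
    (hf'.comp (X (τ, η)) (hasFDerivAt_prodMk_left (X (τ, η)) η)).fderiv
  have h2 : fderiv ℝ (fun u' => f (X (τ, η), u')) η =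
      (fderiv ℝ f (X (τ, η), η)).comp (ContinuousLinearMap.inr ℝ _ _) :=
    (hf'.comp η (hasFDerivAt_prodMk_right (X (τ, η)) η)).fderiv
  have h3 : HasFDerivAt (fun y => g (τ, y))
      ((fderiv ℝ f (X (τ, η), η)).comp ((Ψ τ).prod (ContinuousLinearMap.id ℝ _))) η :=
    HasFDerivAt.comp (g := f) (f := fun y => (X (τ, y), y)) η hf' (hXη.prodMk (hasFDerivAt_id η))
  rw [(hGd τ η).unique h3, h1, h2]
  ext1 v
  simp [← map_add]
end
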